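/- Let k ≥ 3, v = 6k+1, and let F be a graph that is a vertex-disjoint union of six cycles of length k with vertices in (Z_{3k} × Z_2) ∪ {∞} satisfying: (i) V(F) = ((Z_{3k} × Z_2) ∪ {∞}) \ {(a,b)} for some (a,b) ∈ Z_{3k} × Z_2; (ii) ∞ has one neighbor in Z_{3k} × {0} and its other neighbor in Z_{3k} × {1}; (iii) Δ_{(0,0)}F ⊇ Z_{3k} \ {0}, Δ_{(0,1)}F ⊇ Z_{3k}, and Δ_{(1,1)}F ⊇ Z_{3k} \ {0, 3, −3}. Then there exists a k-ARCS(6k+1). -/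

import Mathlib

open SimpleGraph

/-- `F` is a `C_k`-factor of `H`: a spanning subgraph of `H` that is 2-regular
and each of whose connected components has exactly `k` vertices. -/
def IsCycleFactor {V : Type*} (H F : SimpleGraph V) (k : ℕ) : Prop :=
  F ≤ H ∧ (∀ v, (F.neighborSet v).ncard = 2) ∧
    ∀ v : V, {w | F.Reachable v w}.ncard = k

/-- The family of graphs `F` partitions the edge set of `H`. -/
def IsDecomp {V ι : Type*} (H : SimpleGraph V) (F : ι → SimpleGraph V) : Prop :=
  (Pairwise fun i j => Disjoint (F i).edgeSet (F j).edgeSet) ∧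
  ∀ e, e ∈ H.edgeSet ↔ ∃ i, e ∈ (F i).edgeSet

/-- `HW H m n α β`: the edge set of `H` can be partitioned into
`α` `C_m`-factors and `β` `C_n`-factors. -/
def HW {V : Type*} (H : SimpleGraph V) (m n α β : ℕ) : Prop :=
  ∃ F : Fin α ⊕ Fin β → SimpleGraph V,
    (∀ i, IsCycleFactor H (F (Sum.inl i)) m) ∧
    (∀ j, IsCycleFactor H (F (Sum.inr j)) n) ∧
    IsDecomp H F

/-- `(α, β) ∈ HWP(v; m, n)` for odd `v`: `K_v` has a 2-factorization into
`α` `C_m`-factors and `β` `C_n`-factors. -/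
def HWPodd (v m n α β : ℕ) : Prop := HW (⊤ : SimpleGraph (Fin v)) m n α β

/-- `F ≤ H` is a vertex-disjoint union of `c` cycles of length `k`:
2-regular on its support, every component has `k` vertices, and the support
has `k * c` vertices. -/
def IsCycleClass {V : Type*} (H F : SimpleGraph V) (k c : ℕ) : Prop :=
  F ≤ H ∧ (∀ v ∈ F.support, (F.neighborSet v).ncard = 2) ∧
  (∀ v ∈ F.support, {w | F.Reachable v w}.ncard = k) ∧
  F.support.ncard = k * c

/-- An almost resolvable `k`-cycle system of order `v`: a partition of the
edges of `K_v` into `(v-1)/2` almost parallel classes (each a vertex-disjoint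
union of `(v-1)/k` `k`-cycles) together with one half-parallel class
(a vertex-disjoint union of `(v-1)/(2k)` `k`-cycles). -/
def IsARCS (k v : ℕ) : Prop :=
  ∃ F : Fin ((v - 1) / 2) ⊕ Unit → SimpleGraph (Fin v),
    (∀ i, IsCycleClass ⊤ (F (Sum.inl i)) k ((v - 1) / k)) ∧
    (∀ j, IsCycleClass ⊤ (F (Sum.inr j)) k ((v - 1) / (2 * k))) ∧
    IsDecomp (⊤ : SimpleGraph (Fin v)) F

/-- The lexicographic product `C_m[n]` of the cycle `C_m` with the empty graph
on `n` vertices, on vertex set `ZMod m × ZMod n`. -/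
def lexCycle (m n : ℕ) : SimpleGraph (ZMod m × ZMod n) :=
  SimpleGraph.fromRel (fun a b => a.1 - b.1 = 1)

/-- The Cayley graph of an additive group with connection set `S`. -/
def cayley {Γ : Type*} [AddGroup Γ] (S : Set Γ) : SimpleGraph Γ :=
  SimpleGraph.fromRel (fun a b => a - b ∈ S)

/-!
The argument works for a finite group `Γ` and an element `d` of order `k` in place of `ZMod (3 * k)`
and `3`. Translating the first coordinate by `g ∈ Γ` and fixing `∞` turns `F` into `|Γ|` almost
parallel classes. An edge inside `Γ × ZMod 2` lies in a translate of `F` as soon as its difference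
is one of the differences of `F`, and every edge at `∞` lies in one, so only edges with difference
`±d` inside `Γ × {1}` can be missed. These are the edges of the Cayley graph of `Γ` with respect to
`d`, whose components are the right cosets of `⟨d⟩`, so they form a half-parallel class. No edge is
covered twice because the classes together have exactly as many edges as the complete graph.
-/

section FiniteFamilies

variable {α ι : Type*} [Finite α] [Fintype ι]

theorem pairwise_disjoint_of_sum_ncard_le_ncard_iUnion (s : ι → Set α)
    (h : ∑ i, (s i).ncard ≤ (⋃ i, s i).ncard) : Pairwise fun i j => Disjoint (s i) (s j) := by
  have hcard : Nat.card (Σ i, s i) ≤ Nat.card (⋃ i, s i) := by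
    simpa only [Nat.card_sigma, Nat.card_coe_set_eq] using h
  have hinj : Function.Injective (Set.sigmaToiUnion s) :=
    ((Set.sigmaToiUnion_surjective s).bijective_of_nat_card_le hcard).injective
  intro i j hij
  refine Set.disjoint_left.2 fun a hai haj => hij ?_
  exact congrArg Sigma.fst (@hinj ⟨i, a, hai⟩ ⟨j, a, haj⟩ rfl)

theorem isDecomp_of_sum_ncard_edgeSet_le {H : SimpleGraph α} {G : ι → SimpleGraph α}
    (hG : ⨆ i, G i = H) (hcard : ∑ i, (G i).edgeSet.ncard ≤ H.edgeSet.ncard) :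
    IsDecomp H G := by
  have hunion : H.edgeSet = ⋃ i, (G i).edgeSet := by rw [← hG, edgeSet_iSup]
  refine ⟨pairwise_disjoint_of_sum_ncard_le_ncard_iUnion _ (hunion ▸ hcard), fun e => ?_⟩
  rw [hunion, Set.mem_iUnion]

end FiniteFamilies

section Transport

variable {V W ι κ : Type*}

theorem IsDecomp.comap {H : SimpleGraph V} {G : ι → SimpleGraph V} (h : IsDecomp H G)
    (f : W → V) : IsDecomp (H.comap f) fun i => (G i).comap f := by
  constructor
  · refine fun i j hij => Set.disjoint_left.2 fun e => ?_
    induction e with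
    | _ u v => exact fun hi hj => (h.1 hij).notMem_of_mem_left (a := s(f u, f v)) hi hj
  · intro e
    induction e with
    | _ u v => exact h.2 s(f u, f v)

theorem IsDecomp.reindex {H : SimpleGraph V} {G : ι → SimpleGraph V} (h : IsDecomp H G)
    (σ : κ ≃ ι) : IsDecomp H (G ∘ σ) :=
  ⟨fun _ _ hij => h.1 (σ.injective.ne hij), fun e => (h.2 e).trans σ.surjective.exists⟩

theorem setOf_map_reachable_eq_image (F : SimpleGraph V) (f : V ↪ W) (v : V) :
    {w | (F.map f).Reachable (f v) w} = f '' {w | F.Reachable v w} := by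
  apply Set.Subset.antisymm
  · intro w hw
    induction (reachable_iff_reflTransGen _ _).1 hw with
    | refl => exact ⟨v, .rfl, rfl⟩
    | tail hreach hadj ih =>
      obtain ⟨x, hx, rfl⟩ := ih ((reachable_iff_reflTransGen _ _).2 hreach)
      obtain ⟨y, hy, rfl⟩ := (F.neighborSet_map f x).subset hadj
      exact ⟨y, hx.trans hy.reachable, rfl⟩
  · rintro _ ⟨w, hw, rfl⟩
    exact hw.map (Embedding.map f F).toHom

variable {H H' F : SimpleGraph V} {k c : ℕ}

theorem IsCycleClass.map (h : IsCycleClass H F k c) (f : V ↪ W) :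
    IsCycleClass (H.map f) (F.map f) k c := by
  obtain ⟨hle, hdeg, hcomp, hcard⟩ := h
  refine ⟨map_monotone f hle, ?_, ?_, ?_⟩
  · rw [support_map]
    rintro _ ⟨v, hv, rfl⟩
    rw [neighborSet_map, Set.ncard_image_of_injective _ f.injective, hdeg v hv]
  · rw [support_map]
    rintro _ ⟨v, hv, rfl⟩
    rw [setOf_map_reachable_eq_image, Set.ncard_image_of_injective _ f.injective, hcomp v hv]
  · rw [support_map, Set.ncard_image_of_injective _ f.injective, hcard]

theorem IsCycleClass.mono (h : IsCycleClass H F k c) (hH : H ≤ H') : IsCycleClass H' F k c :=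
  ⟨h.1.trans hH, h.2⟩

theorem IsCycleClass.map_top (h : IsCycleClass H F k c) (f : V ↪ W) :
    IsCycleClass ⊤ (F.map f) k c :=
  (h.map f).mono le_top

end Transport

section Counting

theorem IsCycleClass.ncard_edgeSet {V : Type*} [Finite V] {H F : SimpleGraph V} {k c : ℕ}
    (h : IsCycleClass H F k c) : F.edgeSet.ncard = k * c := by
  classical
  have := Fintype.ofFinite V
  obtain ⟨-, hdeg, -, hcard⟩ := h
  have hdegree (v : V) : F.degree v = if v ∈ F.support then 2 else 0 := by
    split_ifs with hv
    · rw [← hdeg v hv, Set.ncard_eq_toFinset_card', Set.toFinset_card, card_neighborSet_eq_degree]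
    · exact (F.degree_eq_zero v).2 fun w hw => hv ⟨w, hw⟩
  have hsum : 2 * F.edgeSet.ncard = 2 * F.support.ncard := by
    calc 2 * F.edgeSet.ncard = ∑ v, F.degree v := by
          rw [sum_degrees_eq_twice_card_edges, ← coe_edgeFinset, Set.ncard_coe_finset]
      _ = 2 * F.support.ncard := by
          simp [hdegree, Finset.sum_ite, Set.ncard_eq_toFinset_card', Fintype.card_subtype,
            mul_comm]
  omega

theorem ncard_edgeSet_top (V : Type*) [Finite V] :
    (⊤ : SimpleGraph V).edgeSet.ncard = (Nat.card V).choose 2 := by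
  classical
  have := Fintype.ofFinite V
  rw [← coe_edgeFinset, Set.ncard_coe_finset, card_edgeFinset_top_eq_card_choose_two,
    Nat.card_eq_fintype_card]

end Counting

section ARCS

variable {V ι : Type*} {A : ι → SimpleGraph V} {B : SimpleGraph V}

theorem isARCS_of_isDecomp {k v : ℕ} (e : V ≃ Fin v) (σ : Fin ((v - 1) / 2) ≃ ι)
    (hA : ∀ i, IsCycleClass ⊤ (A i) k ((v - 1) / k))
    (hB : IsCycleClass ⊤ B k ((v - 1) / (2 * k)))
    (h : IsDecomp ⊤ (Sum.elim A fun _ : Unit => B)) : IsARCS k v := by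
  refine ⟨fun i => (Sum.elim A (fun _ => B) (σ.sumCongr (.refl Unit) i)).map e.toEmbedding,
    fun i => (hA (σ i)).map_top _, fun _ => hB.map_top _, ?_⟩
  have hcomap := (h.reindex (σ.sumCongr (.refl Unit))).comap e.symm.toEmbedding
  have htop : (⊤ : SimpleGraph V).comap e.symm.toEmbedding = ⊤ := comap_top e.symm.injective
  simpa only [htop, comap_symm, Function.comp_apply] using hcomap

theorem isARCS_of_cover [Finite V] [Finite ι] {k m : ℕ} (hk : k ≠ 0)
    (hV : Nat.card V = 2 * m * k + 1) (hι : Nat.card ι = m * k)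
    (hA : ∀ i, IsCycleClass ⊤ (A i) k (2 * m)) (hB : IsCycleClass ⊤ B k m)
    (hcover : ∀ u v, u ≠ v → B.Adj u v ∨ ∃ i, (A i).Adj u v) : IsARCS k (2 * m * k + 1) := by
  have := Fintype.ofFinite ι
  have hdecomp : IsDecomp ⊤ (Sum.elim A fun _ : Unit => B) := by
    refine isDecomp_of_sum_ncard_edgeSet_le (top_le_iff.1 fun u v huv => ?_) ?_
    · simpa [or_comm] using hcover u v huv
    · have hchoose : (2 * m * k + 1).choose 2 = m * k * (k * (2 * m)) + k * m := by
        rw [Nat.choose_two_right, Nat.add_sub_cancel]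
        exact Nat.div_eq_of_eq_mul_left two_pos (by ring)
      rw [ncard_edgeSet_top, hV, hchoose]
      simp [fun i => (hA i).ncard_edgeSet, hB.ncard_edgeSet, ← Nat.card_eq_fintype_card, hι]
  have hclasses : Nat.card ι = (2 * m * k + 1 - 1) / 2 := by
    rw [hι, Nat.add_sub_cancel, mul_assoc, Nat.mul_div_cancel_left _ two_pos]
  have hcycles : (2 * m * k + 1 - 1) / k = 2 * m := by
    rw [Nat.add_sub_cancel, Nat.mul_div_cancel _ (Nat.pos_of_ne_zero hk)]
  have hhalf : (2 * m * k + 1 - 1) / (2 * k) = m := by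
    rw [mul_comm 2 k, ← Nat.div_div_eq_div_mul, hcycles, Nat.mul_div_cancel_left _ two_pos]
  exact isARCS_of_isDecomp (Finite.equivFinOfCardEq hV) (Finite.equivFinOfCardEq hclasses).symm
    (by rwa [hcycles]) (by rwa [hhalf]) hdecomp

end ARCS

section Cayley

variable {Γ : Type*} [AddGroup Γ]

theorem cayley_reachable_iff {S : Set Γ} {x y : Γ} :
    (cayley S).Reachable x y ↔ x - y ∈ AddSubgroup.closure S := by
  constructor
  · rintro ⟨p⟩
    induction p with
    | nil => simp
    | @cons u v w hadj _ ih =>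
      have huv : u - v ∈ AddSubgroup.closure S := by
        rcases hadj.2 with huv | hvu
        · exact AddSubgroup.subset_closure huv
        · rw [← neg_sub]
          exact neg_mem (AddSubgroup.subset_closure hvu)
      rw [← sub_add_sub_cancel u v w]
      exact add_mem huv ih
  · intro hxy
    suffices ∀ z, (cayley S).Reachable (x - y + z) z by simpa using this y
    generalize x - y = a at hxy
    induction hxy using AddSubgroup.closure_induction with
    | mem s hs =>
      intro z
      by_cases h : s + z = z
      · rw [h]
      · exact Adj.reachable ⟨h, .inl (by simpa using hs)⟩
    | zero => simp
    | add s t _ _ hs ht => exact fun z => add_assoc s t z ▸ (hs (t + z)).trans (ht z)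
    | neg s _ hs =>
      intro z
      simpa using (hs (-s + z)).symm

theorem cayley_singleton_adj {d x y : Γ} :
    (cayley {d}).Adj x y ↔ x ≠ y ∧ (x - y = d ∨ x - y = -d) := by
  rw [← neg_sub y x, neg_inj, neg_sub]
  exact fromRel_adj _ _ _

theorem cayley_singleton_neighborSet {d : Γ} (hd : d ≠ 0) (x : Γ) :
    (cayley {d}).neighborSet x = {-d + x, d + x} := by
  ext y
  have hsub (z : Γ) : x - y = z ↔ y = -z + x := by
    rw [sub_eq_iff_eq_add, eq_neg_add_iff_add_eq, eq_comm]
  simp only [mem_neighborSet, cayley_singleton_adj, hsub, neg_neg, Set.mem_insert_iff,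
    Set.mem_singleton_iff, and_iff_right_iff_imp]
  rintro (rfl | rfl) <;> simp [hd]

theorem isCycleClass_cayley_singleton {d : Γ} {m : ℕ} (hd : 3 ≤ addOrderOf d)
    (hΓ : Nat.card Γ = addOrderOf d * m) : IsCycleClass ⊤ (cayley {d}) (addOrderOf d) m := by
  have hd0 : d ≠ 0 := by
    rintro rfl
    simp at hd
  have hneg : -d ≠ d := by
    intro h
    have : 2 • d = 0 := by rw [two_nsmul, ← eq_neg_iff_add_eq_zero, h]
    have := Nat.le_of_dvd two_pos (addOrderOf_dvd_of_nsmul_eq_zero this)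
    omega
  have hsupport : (cayley {d}).support = Set.univ := Set.eq_univ_of_forall fun x =>
    ⟨d + x, (cayley_singleton_neighborSet hd0 x).ge (by simp)⟩
  refine ⟨le_top, fun x _ => ?_, fun x _ => ?_, ?_⟩
  · rw [cayley_singleton_neighborSet hd0, Set.ncard_pair (by simpa using hneg)]
  · have hcoset : {y | (cayley {d}).Reachable x y} =
        Equiv.subLeft x ⁻¹' (AddSubgroup.zmultiples d : Set Γ) := by
      ext y
      simp [cayley_reachable_iff, AddSubgroup.zmultiples_eq_closure]
    rw [hcoset, Set.ncard_preimage_of_injective_subset_range (Equiv.injective _) (by simp),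
      ← Nat.card_coe_set_eq, SetLike.coe_sort_coe, Nat.card_zmultiples]
  · rw [hsupport, Set.ncard_univ, hΓ]

end Cayley

section Translates

variable {Γ β : Type*} [AddGroup Γ]

/-- The differences `Δ_{(i,j)} F` of a graph on `(Γ × β) ∪ {∞}`, where `∞` is `none`. Multiplicities
are dropped. -/
def differences (F : SimpleGraph (Option (Γ × β))) (i j : β) : Set Γ :=
  {z | ∃ x y, F.Adj (some (x, i)) (some (y, j)) ∧ x - y = z}

/-- Right translation by `g` on `(Γ × β) ∪ {∞}`, which fixes `∞` and preserves differences. -/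
def translation (g : Γ) : Option (Γ × β) ↪ Option (Γ × β) :=
  ((addRightEmbedding g).prodMap (.refl β)).optionMap

/-- The inclusion of `Γ` as the layer `Γ × {j}` of `(Γ × β) ∪ {∞}`. -/
def layer (j : β) : Γ ↪ Option (Γ × β) :=
  (Function.Embedding.sectL Γ j).trans .some

variable {F : SimpleGraph (Option (Γ × β))}

theorem exists_map_translation_adj {i j : β} {u w : Γ} (h : u - w ∈ differences F i j) :
    ∃ g, (F.map (translation g)).Adj (some (u, i)) (some (w, j)) := by
  obtain ⟨x, y, hadj, hxy⟩ := h
  have hu : translation (-x + u) (some (x, i)) = some (u, i) := by simp [translation]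
  have hw : translation (-x + u) (some (y, j)) = some (w, j) := by
    have : y + (-x + u) = w := by
      rw [← add_assoc, ← sub_eq_add_neg, ← neg_sub x y, hxy, neg_sub, sub_add_cancel]
    simp [translation, this]
  exact ⟨-x + u, hu ▸ hw ▸ map_adj_apply.2 hadj⟩

theorem exists_map_translation_adj_none {j : β} {x : Γ} (h : F.Adj none (some (x, j))) (u : Γ) :
    ∃ g, (F.map (translation g)).Adj none (some (u, j)) := by
  have hu : translation (-x + u) (some (x, j)) = some (u, j) := by simp [translation]
  have hnone : translation (-x + u) (none : Option (Γ × β)) = none := rfl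
  exact ⟨-x + u, hu ▸ hnone ▸ map_adj_apply.2 h⟩

end Translates

theorem map_layer_adj_or_exists_map_translation_adj {Γ : Type*} [AddGroup Γ] {d : Γ}
    {F : SimpleGraph (Option (Γ × ZMod 2))} (hnone : ∀ j, ∃ x, F.Adj none (some (x, j)))
    (h00 : {0}ᶜ ⊆ differences F 0 0) (h01 : differences F 0 1 = Set.univ)
    (h11 : {0, d, -d}ᶜ ⊆ differences F 1 1) {p q : Option (Γ × ZMod 2)} (hpq : p ≠ q) :
    ((cayley {d}).map (layer 1)).Adj p q ∨ ∃ g, (F.map (translation g)).Adj p q := by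
  have hinfty (u : Γ) (j : ZMod 2) : ∃ g, (F.map (translation g)).Adj none (some (u, j)) :=
    let ⟨_, hx⟩ := hnone j
    exists_map_translation_adj_none hx u
  have hcross (u w : Γ) : ∃ g, (F.map (translation g)).Adj (some (u, 0)) (some (w, 1)) :=
    exists_map_translation_adj (h01 ▸ Set.mem_univ _)
  have hlayer : ∀ j : ZMod 2, j = 0 ∨ j = 1 := by decide
  match p, q with
  | none, none => exact absurd rfl hpq
  | none, some (w, j) => exact .inr (hinfty w j)
  | some (u, i), none => exact .inr ((hinfty u i).imp fun _ h => h.symm)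
  | some (u, i), some (w, j) =>
    rcases hlayer i with rfl | rfl <;> rcases hlayer j with rfl | rfl
    · have huw : u - w ≠ 0 := fun h => hpq (by rw [sub_eq_zero.1 h])
      exact .inr (exists_map_translation_adj (h00 huw))
    · exact .inr (hcross u w)
    · exact .inr ((hcross w u).imp fun _ h => h.symm)
    · have huw : u ≠ w := fun h => hpq (by rw [h])
      by_cases hd : (cayley {d}).Adj u w
      · exact .inl (map_adj_apply (f := layer 1) |>.2 hd)
      · refine .inr (exists_map_translation_adj (h11 ?_))
        simpa [cayley_singleton_adj, huw, sub_eq_zero] using hd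

theorem addOrderOf_natCast_zmod_mul {a k : ℕ} (ha : a ≠ 0) :
    addOrderOf (a : ZMod (a * k)) = k := by
  rw [ZMod.addOrderOf_coe' _ ha, Nat.gcd_mul_right_left,
    Nat.mul_div_cancel_left _ (Nat.pos_of_ne_zero ha)]

theorem stmt5_general {Γ : Type*} [AddGroup Γ] [Finite Γ] {k m : ℕ} (hk : 3 ≤ k)
    (hΓ : Nat.card Γ = m * k) {d : Γ} (hd : addOrderOf d = k)
    {F : SimpleGraph (Option (Γ × ZMod 2))} (hF : IsCycleClass ⊤ F k (2 * m))
    (hnone : ∀ j, ∃ x, F.Adj none (some (x, j)))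
    (h00 : {0}ᶜ ⊆ differences F 0 0) (h01 : differences F 0 1 = Set.univ)
    (h11 : {0, d, -d}ᶜ ⊆ differences F 1 1) : IsARCS k (2 * m * k + 1) := by
  subst hd
  have hcard : Nat.card (Option (Γ × ZMod 2)) = 2 * m * addOrderOf d + 1 := by
    rw [Finite.card_option, Nat.card_prod, hΓ, Nat.card_zmod]
    ring
  have hhalf : IsCycleClass ⊤ (cayley {d}) (addOrderOf d) m :=
    isCycleClass_cayley_singleton hk (hΓ.trans (mul_comm _ _))
  exact isARCS_of_cover (by omega) hcard hΓ (fun g => hF.map_top (translation g))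
    (hhalf.map_top (layer 1))
    fun _ _ => map_layer_adj_or_exists_map_translation_adj hnone h00 h01 h11

theorem stmt5 (k : ℕ) (hk : 3 ≤ k)
    (F : SimpleGraph (Option (ZMod (3 * k) × ZMod 2)))
    (hF : (∀ v ∈ F.support, (F.neighborSet v).ncard = 2) ∧
      (∀ v ∈ F.support, {w | F.Reachable v w}.ncard = k) ∧
      F.support.ncard = 6 * k)
    (hi : ∃ (a : ZMod (3 * k)) (b : ZMod 2), F.support = {x | x ≠ some (a, b)})
    (hii : ∃ x y : ZMod (3 * k), F.Adj none (some (x, 0)) ∧ F.Adj none (some (y, 1)))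
    (hiii00 : ∀ z : ZMod (3 * k), z ≠ 0 →
      ∃ x y : ZMod (3 * k), F.Adj (some (x, 0)) (some (y, 0)) ∧ x - y = z)
    (hiii01 : ∀ z : ZMod (3 * k),
      ∃ x y : ZMod (3 * k), F.Adj (some (x, 0)) (some (y, 1)) ∧ x - y = z)
    (hiii11 : ∀ z : ZMod (3 * k), z ≠ 0 → z ≠ 3 → z ≠ -3 →
      ∃ x y : ZMod (3 * k), F.Adj (some (x, 1)) (some (y, 1)) ∧ x - y = z) :
    IsARCS k (6 * k + 1) := by
  have : NeZero (3 * k) := ⟨by omega⟩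
  obtain ⟨hdeg, hcomp, hcard⟩ := hF
  obtain ⟨x, y, hx, hy⟩ := hii
  exact stmt5_general hk (Nat.card_zmod (3 * k)) (addOrderOf_natCast_zmod_mul three_ne_zero)
    ⟨le_top, hdeg, hcomp, hcard.trans (mul_comm 6 k)⟩
    (Fin.forall_fin_two.2 ⟨⟨x, hx⟩, ⟨y, hy⟩⟩) hiii00 (Set.eq_univ_of_forall hiii01)
    fun z hz => hiii11 z (fun h => hz (.inl h)) (fun h => hz (.inr (.inl h)))
      fun h => hz (.inr (.inr h))
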